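/- arXiv:1106.2213 — 2 statements merged into one kernel-verified Lean document; each statement's English description precedes it below -/
import Mathlib

section
/- Let α ∈ [0,1] and let A, B be positive definite n×n complex matrices. Then for every k = 1,…,n: (i) ((∏_{j=1}^k μ_j(A))^{1/k})^{1-α} ((∏_{j=n+1-k}^n μ_j(B))^{1/k})^{α} ≤ (∏_{j=1}^k μ_j(A #_α B))^{1/k} ≤ ((∏_{j=1}^k μ_j(A))^{1/k})^{1-α} ((∏_{j=1}^k μ_j(B))^{1/k})^{α}; and (ii) ((∏_{j=n+1-k}^n μ_j(A))^{1/k})^{1-α} ((∏_{j=1}^k μ_j(B))^{1/k})^{α} ≥ (∏_{j=n+1-k}^n μ_j(A #_α B))^{1/k} ≥ ((∏_{j=n+1-k}^n μ_j(A))^{1/k})^{1-α} ((∏_{j=n+1-k}^n μ_j(B))^{1/k})^{α}. -/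
open scoped ComplexOrder

section Defs

variable {n : ℕ}

/-- eigenvalues of a Hermitian matrix listed in increasing order -/
noncomputable def eigUp {A : Matrix (Fin n) (Fin n) ℂ} (hA : A.IsHermitian) : Fin n → ℝ :=
  fun i => hA.eigenvalues (Tuple.sort hA.eigenvalues i)

/-- eigenvalues of a Hermitian matrix listed in decreasing order: `eigDown hA i = μ_{i+1}(A)` -/
noncomputable def eigDown {A : Matrix (Fin n) (Fin n) ℂ} (hA : A.IsHermitian) : Fin n → ℝ :=
  fun i => eigUp hA i.rev

/-- the product of the `k` smallest eigenvalues, `∏_{j=1}^k μ_{n+1-j}(A)` -/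
noncomputable def prodSmall (A : Matrix (Fin n) (Fin n) ℂ) (k : ℕ) : ℝ :=
  if hA : A.IsHermitian then
    ∏ i ∈ Finset.univ.filter (fun i : Fin n => (i : ℕ) < k), eigUp hA i
  else 0

/-- the product of the `k` largest eigenvalues, `∏_{j=1}^k μ_j(A)` -/
noncomputable def prodLarge (A : Matrix (Fin n) (Fin n) ℂ) (k : ℕ) : ℝ :=
  if hA : A.IsHermitian then
    ∏ i ∈ Finset.univ.filter (fun i : Fin n => (i : ℕ) < k), eigDown hA i
  else 0

/-- the sum of the `k` smallest eigenvalues, `∑_{j=1}^k μ_{n+1-j}(A)` -/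
noncomputable def sumSmall (A : Matrix (Fin n) (Fin n) ℂ) (k : ℕ) : ℝ :=
  if hA : A.IsHermitian then
    ∑ i ∈ Finset.univ.filter (fun i : Fin n => (i : ℕ) < k), eigUp hA i
  else 0

/-- A doubly concave function on an interval `Ω ⊆ [0,∞)`. -/
structure DoublyConcaveOn (f : ℝ → ℝ) (Ω : Set ℝ) : Prop where
  subset_Ici : Ω ⊆ Set.Ici (0 : ℝ)
  nonneg : ∀ x ∈ Ω, 0 ≤ f x
  continuousOn : ContinuousOn f Ω
  concaveOn : ConcaveOn ℝ Ω f
  geomConcave : ∀ x ∈ Ω, ∀ y ∈ Ω, Real.sqrt (f x * f y) ≤ f (Real.sqrt (x * y))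

/-- `𝔼_p(Z) := (𝔼(Z^p))^{1/p}` -/
noncomputable def Ep {n m : ℕ} (E : Matrix (Fin n) (Fin n) ℂ →ₗ[ℂ] Matrix (Fin m) (Fin m) ℂ)
    (p : ℝ) (Z : Matrix (Fin n) (Fin n) ℂ) : Matrix (Fin m) (Fin m) ℂ :=
  cfc (fun x : ℝ => x ^ (1 / p)) (E (cfc (fun x : ℝ => x ^ p) Z))

/-- the power `p`-mean `A β_p B := ((A^p + B^p)/2)^{1/p}` -/
noncomputable def betaP (p : ℝ) (A B : Matrix (Fin n) (Fin n) ℂ) : Matrix (Fin n) (Fin n) ℂ :=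
  cfc (fun x : ℝ => x ^ (1 / p))
    ((2 : ℂ)⁻¹ • (cfc (fun x : ℝ => x ^ p) A + cfc (fun x : ℝ => x ^ p) B))

noncomputable def sqrtM (A : Matrix (Fin n) (Fin n) ℂ) : Matrix (Fin n) (Fin n) ℂ :=
  cfc Real.sqrt A

noncomputable def invSqrtM (A : Matrix (Fin n) (Fin n) ℂ) : Matrix (Fin n) (Fin n) ℂ :=
  cfc (fun x : ℝ => (Real.sqrt x)⁻¹) A

/-- operator mean with representing function `h`: `A σ B = A^{1/2} h(A^{-1/2} B A^{-1/2}) A^{1/2}` -/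
noncomputable def opMean (h : ℝ → ℝ) (A B : Matrix (Fin n) (Fin n) ℂ) :
    Matrix (Fin n) (Fin n) ℂ :=
  sqrtM A * cfc h (invSqrtM A * B * invSqrtM A) * sqrtM A

/-- the weighted geometric mean `A #_α B` -/
noncomputable def sharp (α : ℝ) (A B : Matrix (Fin n) (Fin n) ℂ) : Matrix (Fin n) (Fin n) ℂ :=
  sqrtM A * cfc (fun x : ℝ => x ^ α) (invSqrtM A * B * invSqrtM A) * sqrtM A

/-- the (real) determinant of a Hermitian matrix -/
noncomputable def rdet (A : Matrix (Fin n) (Fin n) ℂ) : ℝ := (A.det).re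

open Classical in
/-- the derived anti-norm `‖A‖_! = ‖A^{-p}‖^{-1/p}` for invertible positive `A`, `0` otherwise. -/
noncomputable def derivedAntiNorm (N : Matrix (Fin n) (Fin n) ℂ → ℝ) (p : ℝ)
    (A : Matrix (Fin n) (Fin n) ℂ) : ℝ :=
  if IsUnit A.det then (N (cfc (fun x : ℝ => x ^ (-p)) A)) ^ (-(1 / p)) else 0

end Defs

open scoped MatrixOrder Matrix.Norms.L2Operator
open Set.powersetCard (ofFinEmbEquiv)

namespace Matrix

section Compound

variable {I R : Type*} [LinearOrder I] [Fintype I] [CommRing R]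

/-- The `k`-th compound matrix of `A`: the matrix of `⋀^k A` in the standard basis. -/
noncomputable def compound (k : ℕ) (A : Matrix I I R) :
    Matrix (Set.powersetCard I k) (Set.powersetCard I k) R :=
  LinearMap.toMatrix ((Pi.basisFun R I).exteriorPower k) ((Pi.basisFun R I).exteriorPower k)
    (exteriorPower.map k (toLin' A))

theorem compound_mul (k : ℕ) (A B : Matrix I I R) :
    compound k (A * B) = compound k A * compound k B := by
  rw [compound, toLin'_mul, exteriorPower.map_comp,
    LinearMap.toMatrix_comp _ ((Pi.basisFun R I).exteriorPower k)]
  rfl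

@[simp]
theorem compound_one (k : ℕ) : compound k (1 : Matrix I I R) = 1 := by
  rw [compound, toLin'_one, exteriorPower.map_id, LinearMap.toMatrix_id]

theorem compound_apply (k : ℕ) (A : Matrix I I R) (s t : Set.powersetCard I k) :
    compound k A s t = (A.submatrix (ofFinEmbEquiv.symm s) (ofFinEmbEquiv.symm t)).det := by
  rw [compound, LinearMap.toMatrix_apply, exteriorPower.basis_apply,
    exteriorPower.map_apply_ιMulti_family, exteriorPower.basis_repr_apply,
    exteriorPower.ιMulti_family, exteriorPower.ιMultiDual_apply_ιMulti, ← det_transpose]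
  congr 1
  ext i j
  simp

theorem compound_diagonal (k : ℕ) (d : I → R) :
    compound k (diagonal d) =
      diagonal fun s : Set.powersetCard I k => ∏ i ∈ (s : Finset I), d i := by
  have key (s : Set.powersetCard I k) :
      exteriorPower.map k (toLin' (diagonal d)) ((Pi.basisFun R I).exteriorPower k s) =
        (∏ i ∈ (s : Finset I), d i) • (Pi.basisFun R I).exteriorPower k s := by
    have hprod : ∏ i ∈ (s : Finset I), d i = ∏ j, d (ofFinEmbEquiv.symm s j) := by
      rw [← Finset.prod_coe_sort, ← Equiv.prod_comp (Finset.orderIsoOfFin _ s.2).toEquiv]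
      rfl
    rw [exteriorPower.basis_apply, exteriorPower.map_apply_ιMulti_family, hprod,
      exteriorPower.ιMulti_family, exteriorPower.ιMulti_family, ← AlternatingMap.map_smul_univ]
    congr 1
    ext j i
    simp only [Function.comp_apply, Pi.basisFun_apply, toLin'_apply, diagonal_mulVec_single,
      Pi.smul_apply, smul_eq_mul, Pi.single_apply, mul_one, mul_ite, mul_zero]
  ext s t
  rw [compound, LinearMap.toMatrix_apply, key, diagonal_apply]
  by_cases h : s = t <;> simp [h, eq_comm]

theorem compound_conjTranspose [StarRing R] (k : ℕ) (A : Matrix I I R) :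
    compound k Aᴴ = (compound k A)ᴴ := by
  ext s t
  rw [conjTranspose_apply, compound_apply, compound_apply, ← det_conjTranspose,
    conjTranspose_submatrix]

end Compound

section Spectral

variable {N : Type*} [Fintype N] [DecidableEq N]

theorem spectrum_conjStarAlgAut_diagonal (u : unitary (Matrix N N ℂ)) (d : N → ℝ) :
    spectrum ℝ (Unitary.conjStarAlgAut ℂ _ u (diagonal fun i => (d i : ℂ))) = Set.range d := by
  ext x
  rw [← spectrum.algebraMap_mem_iff ℂ]
  simp

theorem cfc_conjStarAlgAut_diagonal (u : unitary (Matrix N N ℂ)) (d : N → ℝ) (f : ℝ → ℝ) :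
    cfc f (Unitary.conjStarAlgAut ℂ _ u (diagonal fun i => (d i : ℂ))) =
      Unitary.conjStarAlgAut ℂ _ u (diagonal fun i => (f (d i) : ℂ)) := by
  let φ : (N → ℂ) →ₐ[ℝ] Matrix N N ℂ :=
    ((Unitary.conjStarAlgAut ℂ (Matrix N N ℂ) u).toAlgEquiv.toAlgHom.comp
      (diagonalAlgHom ℂ)).restrictScalars ℝ
  let p := Lagrange.interpolate (Finset.univ.image d) id f
  have hp (i : N) : p.eval (d i) = f (d i) :=
    Lagrange.eval_interpolate_at_node f (Set.injOn_id _) (by simp)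
  have hsa : IsSelfAdjoint (Unitary.conjStarAlgAut ℂ _ u (diagonal fun i => (d i : ℂ))) := by
    refine IsSelfAdjoint.map ?_ _
    simp [IsSelfAdjoint, star_eq_conjTranspose, diagonal_conjTranspose, Pi.star_def]
  have hcongr : Set.EqOn f p.eval
      (spectrum ℝ (Unitary.conjStarAlgAut ℂ _ u (diagonal fun i => (d i : ℂ)))) := by
    rw [spectrum_conjStarAlgAut_diagonal]
    rintro _ ⟨i, rfl⟩
    exact (hp i).symm
  rw [cfc_congr hcongr, cfc_polynomial p _ hsa]
  have hφ : Polynomial.aeval (φ fun i => (d i : ℂ)) p = φ fun i => (f (d i) : ℂ) := by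
    rw [Polynomial.aeval_algHom_apply]
    congr 1
    ext i
    rw [← hp i]
    change Pi.evalAlgHom ℝ (fun _ : N => ℂ) i (Polynomial.aeval (fun i => (d i : ℂ)) p) = _
    rw [← Polynomial.aeval_algHom_apply]
    exact Polynomial.aeval_algebraMap_apply_eq_algebraMap_eval (A := ℂ) (d i) p
  exact hφ

end Spectral

section CompoundSpectral

variable {I : Type*} [LinearOrder I] [Fintype I] (k : ℕ)

theorem compound_mem_unitary {U : Matrix I I ℂ} (hU : U ∈ unitary (Matrix I I ℂ)) :
    compound k U ∈ unitary (Matrix (Set.powersetCard I k) (Set.powersetCard I k) ℂ) := by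
  rw [Unitary.mem_iff] at hU ⊢
  simp only [star_eq_conjTranspose, ← compound_conjTranspose, ← compound_mul] at hU ⊢
  simp [hU]

theorem compound_conjStarAlgAut_diagonal (u : unitary (Matrix I I ℂ)) (d : I → ℝ) :
    compound k (Unitary.conjStarAlgAut ℂ _ u (diagonal fun i => (d i : ℂ))) =
      Unitary.conjStarAlgAut ℂ _
        ⟨compound k (u : Matrix I I ℂ), compound_mem_unitary k (SetLike.coe_mem u)⟩
        (diagonal fun s : Set.powersetCard I k => ((∏ i ∈ (s : Finset I), d i : ℝ) : ℂ)) := by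
  simp only [Unitary.conjStarAlgAut_apply, compound_mul, compound_diagonal, star_eq_conjTranspose,
    compound_conjTranspose, Complex.ofReal_prod]

theorem spectrum_compound {A : Matrix I I ℂ} (hA : A.IsHermitian) :
    spectrum ℝ (compound k A) =
      Set.range fun s : Set.powersetCard I k => ∏ i ∈ (s : Finset I), hA.eigenvalues i := by
  rw [← spectrum_conjStarAlgAut_diagonal, ← compound_conjStarAlgAut_diagonal k]
  exact congrArg _ (congrArg _ hA.spectral_theorem)

/-- Taking compounds commutes with the functional calculus for multiplicative functions. -/
theorem compound_cfc {A : Matrix I I ℂ} (hA : A.PosSemidef) {f : ℝ → ℝ}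
    (hf : ∀ (s : Finset I) (x : I → ℝ), (∀ i, 0 ≤ x i) → f (∏ i ∈ s, x i) = ∏ i ∈ s, f (x i)) :
    compound k (cfc f A) = cfc f (compound k A) := by
  have h : A = Unitary.conjStarAlgAut ℂ _ hA.1.eigenvectorUnitary
    (diagonal fun i => (hA.1.eigenvalues i : ℂ)) := hA.1.spectral_theorem
  rw [h, cfc_conjStarAlgAut_diagonal, compound_conjStarAlgAut_diagonal,
    compound_conjStarAlgAut_diagonal, cfc_conjStarAlgAut_diagonal]
  simp only [hf _ _ hA.eigenvalues_nonneg]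

theorem PosSemidef.compound {A : Matrix I I ℂ} (hA : A.PosSemidef) :
    (compound k A).PosSemidef := by
  obtain ⟨X, rfl⟩ := CStarAlgebra.nonneg_iff_eq_star_mul_self.mp hA.nonneg
  rw [compound_mul, star_eq_conjTranspose, compound_conjTranspose]
  exact posSemidef_conjTranspose_mul_self _

theorem PosDef.compound {A : Matrix I I ℂ} (hA : A.PosDef) : (compound k A).PosDef := by
  rw [(hA.posSemidef.compound k).posDef_iff_isUnit]
  refine IsUnit.of_mul_eq_one (Matrix.compound k A⁻¹) ?_
  rw [← compound_mul, mul_nonsing_inv _ ((isUnit_iff_isUnit_det A).mp hA.isUnit), compound_one]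

end CompoundSpectral

end Matrix

section GeometricMean

variable {𝒜 : Type*} [CStarAlgebra 𝒜] [PartialOrder 𝒜] [StarOrderedRing 𝒜]

/-- The weighted geometric mean is monotone in its second argument. -/
theorem cfc_sqrt_mul_cfc_rpow_mul_cfc_sqrt_mono {α : ℝ} (hα : α ∈ Set.Icc 0 1) (P : 𝒜)
    {Q₁ Q₂ : 𝒜} (hQ₁ : 0 ≤ Q₁) (hQ : Q₁ ≤ Q₂) :
    cfc Real.sqrt P * cfc (fun x : ℝ => x ^ α)
        (cfc (fun x : ℝ => (√x)⁻¹) P * Q₁ * cfc (fun x : ℝ => (√x)⁻¹) P) * cfc Real.sqrt P ≤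
      cfc Real.sqrt P * cfc (fun x : ℝ => x ^ α)
        (cfc (fun x : ℝ => (√x)⁻¹) P * Q₂ * cfc (fun x : ℝ => (√x)⁻¹) P) * cfc Real.sqrt P := by
  have hR : IsSelfAdjoint (cfc (fun x : ℝ => (√x)⁻¹) P) := cfc_predicate _ _
  have hle := hR.conjugate_le_conjugate hQ
  have h0 := hR.conjugate_nonneg hQ₁
  refine IsSelfAdjoint.conjugate_le_conjugate ?_ (cfc_predicate _ _)
  rw [← CFC.rpow_eq_cfc_real h0, ← CFC.rpow_eq_cfc_real (h0.trans hle)]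
  exact CFC.rpow_le_rpow hα hle

/-- The weighted geometric mean of `P` with the scalar `q` is `q ^ α P ^ (1 - α)`. -/
theorem cfc_sqrt_mul_cfc_rpow_algebraMap_mul_cfc_sqrt {α q : ℝ} (hq : 0 ≤ q) (hα : 0 ≤ α)
    {P : 𝒜} (hP : IsStrictlyPositive P) :
    cfc Real.sqrt P * cfc (fun x : ℝ => x ^ α)
        (cfc (fun x : ℝ => (√x)⁻¹) P * algebraMap ℝ 𝒜 q * cfc (fun x : ℝ => (√x)⁻¹) P) *
          cfc Real.sqrt P =
      cfc (fun x : ℝ => q ^ α * x ^ (1 - α)) P := by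
  have hsa : IsSelfAdjoint P := .of_nonneg hP.nonneg
  have hpos : ∀ x ∈ spectrum ℝ P, 0 < x := fun x hx => hP.spectrum_pos hx
  have hne : ∀ x ∈ spectrum ℝ P, √x ≠ 0 := fun x hx => (Real.sqrt_pos.mpr (hpos x hx)).ne'
  have hc₁ : ContinuousOn (fun x : ℝ => (√x)⁻¹) (spectrum ℝ P) :=
    Real.continuous_sqrt.continuousOn.inv₀ hne
  have hc₂ : ContinuousOn (fun x : ℝ => (√x)⁻¹ * q * (√x)⁻¹) (spectrum ℝ P) := by fun_prop
  have hc₃ : ContinuousOn (fun x : ℝ => ((√x)⁻¹ * q * (√x)⁻¹) ^ α) (spectrum ℝ P) :=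
    hc₂.rpow_const fun _ _ => Or.inr hα
  have hc₄ : ContinuousOn (fun x : ℝ => √x) (spectrum ℝ P) := by fun_prop
  rw [← cfc_const q P, ← cfc_mul _ _ P hc₁ continuousOn_const,
    ← cfc_mul (fun x : ℝ => (√x)⁻¹ * q) _ P (hc₁.mul continuousOn_const) hc₁,
    ← cfc_comp' (fun x : ℝ => x ^ α) _ P (Real.continuous_rpow_const hα).continuousOn hc₂,
    ← cfc_mul _ _ P hc₄ hc₃,
    ← cfc_mul (fun x : ℝ => √x * ((√x)⁻¹ * q * (√x)⁻¹) ^ α) _ P (hc₄.mul hc₃) hc₄]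
  refine cfc_congr fun x hx => ?_
  have hx0 := hpos x hx
  have h1 : (√x)⁻¹ * q * (√x)⁻¹ = q * x⁻¹ := by
    rw [mul_right_comm, ← mul_inv, Real.mul_self_sqrt hx0.le, mul_comm]
  simp only [h1]
  rw [mul_right_comm, Real.mul_self_sqrt hx0.le, Real.mul_rpow hq (inv_nonneg.mpr hx0.le),
    Real.inv_rpow hx0.le, Real.rpow_sub hx0, Real.rpow_one]
  ring

end GeometricMean

section SortedProducts

variable {n k : ℕ}

theorem prod_filter_val_lt_eq (hkn : k ≤ n) (f : Fin n → ℝ) :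
    ∏ i ∈ Finset.univ.filter (fun i : Fin n => (i : ℕ) < k), f i =
      ∏ j : Fin k, f (Fin.castLE hkn j) := by
  refine (Finset.prod_nbij (Fin.castLE hkn) ?_ ?_ ?_ ?_).symm
  · intro j _
    simp
  · exact (Fin.castLE_injective hkn).injOn
  · intro i hi
    simp only [Finset.coe_filter, Finset.mem_univ, true_and, Set.mem_ofPred_eq] at hi
    exact ⟨⟨i, hi⟩, by simp, rfl⟩
  · intro j _
    rfl

/-- For a nonnegative monotone `f`, the product over any `k`-set lies between the products over
the first and the last `k` indices. -/
theorem Monotone.prod_castLE_le_prod_and_prod_le_prod_rev {f : Fin n → ℝ} (hf : Monotone f)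
    (h0 : ∀ i, 0 ≤ f i) (hkn : k ≤ n) {s : Finset (Fin n)} (hs : s.card = k) :
    ∏ j : Fin k, f (Fin.castLE hkn j) ≤ ∏ i ∈ s, f i ∧
      ∏ i ∈ s, f i ≤ ∏ j : Fin k, f (Fin.castLE hkn j).rev := by
  have hprod : ∏ i ∈ s, f i = ∏ j, f (s.orderEmbOfFin hs j) := by
    rw [← Finset.prod_coe_sort, ← Equiv.prod_comp (s.orderIsoOfFin hs).toEquiv]
    rfl
  have hle (g : Fin k ↪o Fin n) (j : Fin k) : (j : ℕ) ≤ g j := by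
    obtain ⟨j, hj⟩ := j
    induction j with
    | zero => exact Nat.zero_le _
    | succ j ih =>
      exact (ih (by lia)).trans_lt (g.strictMono (show (⟨j, by lia⟩ : Fin k) < ⟨j + 1, hj⟩ by simp))
  refine ⟨?_, ?_⟩
  · rw [hprod]
    exact Finset.prod_le_prod (fun _ _ => h0 _) fun j _ => hf (hle _ j)
  · rw [hprod, ← Equiv.prod_comp Fin.revPerm]
    refine Finset.prod_le_prod (fun _ _ => h0 _) fun j _ => hf ?_
    let g : Fin k ↪o Fin n := OrderEmbedding.ofStrictMono (fun j => (s.orderEmbOfFin hs j.rev).rev)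
      fun a b hab => Fin.rev_lt_rev.mpr ((s.orderEmbOfFin hs).strictMono (Fin.rev_lt_rev.mpr hab))
    rw [← Fin.rev_le_rev, Fin.rev_rev]
    exact hle g j

/-- `prodSmall A k` is the least product of `k` eigenvalues of `A`. -/
theorem isLeast_prodSmall {A : Matrix (Fin n) (Fin n) ℂ} (hA : A.PosSemidef) (hkn : k ≤ n) :
    IsLeast (spectrum ℝ (A.compound k)) (prodSmall A k) := by
  rw [Matrix.spectrum_compound k hA.1, prodSmall, dif_pos hA.1, prod_filter_val_lt_eq hkn]
  set σ := Tuple.sort hA.1.eigenvalues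
  have hmono : Monotone (eigUp hA.1) := Tuple.monotone_sort _
  constructor
  · refine ⟨⟨(Finset.univ.map (Fin.castLEEmb hkn)).map σ.toEmbedding, by
      simp [Set.powersetCard]⟩, ?_⟩
    simp [eigUp, σ]
  · rintro _ ⟨s, rfl⟩
    have := (hmono.prod_castLE_le_prod_and_prod_le_prod_rev
      (fun _ => hA.eigenvalues_nonneg _) hkn (s := s.1.map σ.symm.toEmbedding)
      (by simp)).1
    simpa [eigUp, σ] using this

/-- `prodLarge A k` is the greatest product of `k` eigenvalues of `A`. -/
theorem isGreatest_prodLarge {A : Matrix (Fin n) (Fin n) ℂ} (hA : A.PosSemidef) (hkn : k ≤ n) :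
    IsGreatest (spectrum ℝ (A.compound k)) (prodLarge A k) := by
  rw [Matrix.spectrum_compound k hA.1, prodLarge, dif_pos hA.1, prod_filter_val_lt_eq hkn]
  set σ := Tuple.sort hA.1.eigenvalues
  have hmono : Monotone (eigUp hA.1) := Tuple.monotone_sort _
  constructor
  · refine ⟨⟨((Finset.univ.map (Fin.castLEEmb hkn)).map Fin.revPerm.toEmbedding).map
      σ.toEmbedding, by simp [Set.powersetCard]⟩, ?_⟩
    simp [eigDown, eigUp, σ]
  · rintro _ ⟨s, rfl⟩
    have := (hmono.prod_castLE_le_prod_and_prod_le_prod_rev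
      (fun _ => hA.eigenvalues_nonneg _) hkn (s := s.1.map σ.symm.toEmbedding)
      (by simp)).2
    simpa [eigDown, eigUp, σ] using this

end SortedProducts

section Sharp

variable {n : ℕ} {A B : Matrix (Fin n) (Fin n) ℂ} {α : ℝ}

theorem sharp_posSemidef (hB : B.PosSemidef) : (sharp α A B).PosSemidef := by
  have hR : IsSelfAdjoint (invSqrtM A) := cfc_predicate _ _
  have hS : IsSelfAdjoint (sqrtM A) := cfc_predicate _ _
  have h0 := hR.conjugate_nonneg hB.nonneg
  refine Matrix.nonneg_iff_posSemidef.mp (hS.conjugate_nonneg (cfc_nonneg fun x hx => ?_))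
  exact Real.rpow_nonneg (spectrum_nonneg_of_nonneg h0 hx) α

theorem compound_sharp (hA : A.PosSemidef) (hB : B.PosSemidef) (k : ℕ) :
    (sharp α A B).compound k =
      cfc Real.sqrt (A.compound k) * cfc (fun x : ℝ => x ^ α)
        (cfc (fun x : ℝ => (√x)⁻¹) (A.compound k) * B.compound k *
          cfc (fun x : ℝ => (√x)⁻¹) (A.compound k)) * cfc Real.sqrt (A.compound k) := by
  have hR : IsSelfAdjoint (invSqrtM A) := cfc_predicate _ _
  have h0 := Matrix.nonneg_iff_posSemidef.mp (hR.conjugate_nonneg hB.nonneg)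
  have hsqrt (s : Finset (Fin n)) (x : Fin n → ℝ) (hx : ∀ i, 0 ≤ x i) :
      √(∏ i ∈ s, x i) = ∏ i ∈ s, √(x i) := by
    simp only [Real.sqrt_eq_rpow]
    exact (Real.finsetProd_rpow s x (fun i _ => hx i) _).symm
  rw [sharp, Matrix.compound_mul, Matrix.compound_mul, sqrtM, Matrix.compound_cfc k hA hsqrt,
    Matrix.compound_cfc k h0 fun s x hx => (Real.finsetProd_rpow s x (fun i _ => hx i) α).symm,
    Matrix.compound_mul, Matrix.compound_mul, invSqrtM, Matrix.compound_cfc k hA fun s x hx => by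
      rw [hsqrt s x hx, Finset.prod_inv_distrib]]

variable {k : ℕ}

theorem prodSmall_pos (hA : A.PosDef) (hkn : k ≤ n) : 0 < prodSmall A k :=
  (Matrix.isStrictlyPositive_iff_posDef.mpr (hA.compound k)).spectrum_pos
    (isLeast_prodSmall hA.posSemidef hkn).1

theorem prodSmall_le_prodLarge (hA : A.PosSemidef) (hkn : k ≤ n) : prodSmall A k ≤ prodLarge A k :=
  (isLeast_prodSmall hA hkn).2 (isGreatest_prodLarge hA hkn).1

theorem compound_sharp_le (hα0 : 0 ≤ α) (hα1 : α ≤ 1) (hA : A.PosDef) (hB : B.PosDef)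
    (hkn : k ≤ n) :
    (sharp α A B).compound k ≤
      cfc (fun x : ℝ => prodLarge B k ^ α * x ^ (1 - α)) (A.compound k) := by
  have hB' := (hB.compound k).posSemidef
  rw [compound_sharp hA.posSemidef hB.posSemidef, ← cfc_sqrt_mul_cfc_rpow_algebraMap_mul_cfc_sqrt
    ((prodSmall_pos hB hkn).le.trans (prodSmall_le_prodLarge hB.posSemidef hkn)) hα0
    (Matrix.isStrictlyPositive_iff_posDef.mpr (hA.compound k))]
  exact cfc_sqrt_mul_cfc_rpow_mul_cfc_sqrt_mono ⟨hα0, hα1⟩ _ hB'.nonneg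
    ((le_algebraMap_iff_spectrum_le hB'.1).mpr (isGreatest_prodLarge hB.posSemidef hkn).2)

theorem le_compound_sharp (hα0 : 0 ≤ α) (hα1 : α ≤ 1) (hA : A.PosDef) (hB : B.PosDef)
    (hkn : k ≤ n) :
    cfc (fun x : ℝ => prodSmall B k ^ α * x ^ (1 - α)) (A.compound k) ≤
      (sharp α A B).compound k := by
  have hB' := (hB.compound k).posSemidef
  have hpos := (prodSmall_pos hB hkn).le
  rw [compound_sharp hA.posSemidef hB.posSemidef, ← cfc_sqrt_mul_cfc_rpow_algebraMap_mul_cfc_sqrt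
    hpos hα0 (Matrix.isStrictlyPositive_iff_posDef.mpr (hA.compound k))]
  exact cfc_sqrt_mul_cfc_rpow_mul_cfc_sqrt_mono ⟨hα0, hα1⟩ _ (algebraMap_nonneg _ hpos)
    ((algebraMap_le_iff_le_spectrum hB'.1).mpr (isLeast_prodSmall hB.posSemidef hkn).2)

end Sharp

theorem stmt_9 {n : ℕ} (α : ℝ) (hα0 : 0 ≤ α) (hα1 : α ≤ 1)
    (A B : Matrix (Fin n) (Fin n) ℂ) (hA : A.PosDef) (hB : B.PosDef)
    (k : ℕ) (hk1 : 1 ≤ k) (hkn : k ≤ n) :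
    ((prodLarge A k ^ ((k : ℝ)⁻¹)) ^ (1 - α) * (prodSmall B k ^ ((k : ℝ)⁻¹)) ^ α
        ≤ prodLarge (sharp α A B) k ^ ((k : ℝ)⁻¹) ∧
      prodLarge (sharp α A B) k ^ ((k : ℝ)⁻¹)
        ≤ (prodLarge A k ^ ((k : ℝ)⁻¹)) ^ (1 - α) * (prodLarge B k ^ ((k : ℝ)⁻¹)) ^ α) ∧
    (prodSmall (sharp α A B) k ^ ((k : ℝ)⁻¹)
        ≤ (prodSmall A k ^ ((k : ℝ)⁻¹)) ^ (1 - α) * (prodLarge B k ^ ((k : ℝ)⁻¹)) ^ α ∧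
      (prodSmall A k ^ ((k : ℝ)⁻¹)) ^ (1 - α) * (prodSmall B k ^ ((k : ℝ)⁻¹)) ^ α
        ≤ prodSmall (sharp α A B) k ^ ((k : ℝ)⁻¹)) := by
  have hG := sharp_posSemidef (α := α) (A := A) hB.posSemidef
  have hβ : 0 ≤ 1 - α := sub_nonneg.mpr hα1
  have hcont (q : ℝ) : ContinuousOn (fun x : ℝ => q ^ α * x ^ (1 - α))
      (spectrum ℝ (A.compound k)) :=
    (continuous_const.mul (Real.continuous_rpow_const hβ)).continuousOn
  have hA' := (hA.compound k).isHermitian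
  have hG' := (hG.compound k).isHermitian
  have hup := compound_sharp_le hα0 hα1 hA hB hkn
  have hlo := le_compound_sharp hα0 hα1 hA hB hkn
  obtain ⟨hsA, hsA'⟩ := isLeast_prodSmall hA.posSemidef hkn
  obtain ⟨hlA, hlA'⟩ := isGreatest_prodLarge hA.posSemidef hkn
  obtain ⟨hsG, hsG'⟩ := isLeast_prodSmall hG hkn
  obtain ⟨hlG, hlG'⟩ := isGreatest_prodLarge hG hkn
  have hsA0 := (prodSmall_pos hA hkn).le
  have hsB0 := (prodSmall_pos hB hkn).le
  have hlA0 := hsA0.trans (hsA' hlA)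
  have hlB0 := hsB0.trans (prodSmall_le_prodLarge hB.posSemidef hkn)
  have hsG0 : 0 ≤ prodSmall (sharp α A B) k :=
    spectrum_nonneg_of_nonneg (hG.compound k).nonneg hsG
  have hlG0 := hsG0.trans (hsG' hlG)
  have hroot {a b : ℝ} (ha : 0 ≤ a) (hb : 0 ≤ b) :
      (a ^ ((k : ℝ)⁻¹)) ^ (1 - α) * (b ^ ((k : ℝ)⁻¹)) ^ α =
        (b ^ α * a ^ (1 - α)) ^ ((k : ℝ)⁻¹) := by
    rw [Real.mul_rpow (by positivity) (by positivity), ← Real.rpow_mul ha, ← Real.rpow_mul hb,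
      ← Real.rpow_mul ha, ← Real.rpow_mul hb, mul_comm _ (1 - α), mul_comm _ α, mul_comm]
  rw [hroot hlA0 hsB0, hroot hlA0 hlB0, hroot hsA0 hlB0, hroot hsA0 hsB0]
  refine ⟨⟨?_, ?_⟩, ?_, ?_⟩ <;> refine Real.rpow_le_rpow (by positivity) ?_ (by positivity)
  · exact (cfc_le_algebraMap_iff _ _ _ (hcont _) hA').mp
      (hlo.trans ((le_algebraMap_iff_spectrum_le hG').mpr hlG')) _ hlA
  · refine (le_algebraMap_iff_spectrum_le hG').mp
      (hup.trans ((cfc_le_algebraMap_iff _ _ _ (hcont _) hA').mpr fun x hx => ?_)) _ hlG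
    have hx0 : 0 ≤ x := hsA0.trans (hsA' hx)
    have hxA := hlA' hx
    gcongr
  · exact (algebraMap_le_cfc_iff _ _ _ (hcont _) hA').mp
      (((algebraMap_le_iff_le_spectrum hG').mpr hsG').trans hup) _ hsA
  · refine (algebraMap_le_iff_le_spectrum hG').mp
      (((algebraMap_le_cfc_iff _ _ _ (hcont _) hA').mpr fun x hx => ?_).trans hlo) _ hsG
    have hxA := hsA' hx
    gcongr
end

section
/- Let α ∈ [0,1] and let A, B be positive definite n×n complex matrices. Then A #_α B is log-majorized by the weighted geometric mean of the decreasingly ordered eigenvalues: for every k = 1,…,n−1, ∏_{j=1}^k μ_j(A #_α B) ≤ ∏_{j=1}^k μ_j(A)^{1-α} μ_j(B)^{α}, and for k = n equality holds: ∏_{j=1}^n μ_j(A #_α B) = ∏_{j=1}^n μ_j(A)^{1-α} μ_j(B)^{α}. -/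
open scoped ComplexOrder

open Matrix Finset

section CauchyBinet

variable {ι κ R : Type*} [Fintype ι] [Fintype κ] [DecidableEq κ] [CommRing R]

/-- Expansion of the determinant of a product of rectangular matrices along the rows. -/
theorem det_mul_eq_sum_prod_mul_det (P : Matrix κ ι R) (Q : Matrix ι κ R) :
    (P * Q).det = ∑ f : κ → ι, (∏ i, P i (f i)) * (Q.submatrix f id).det := by
  have h : (P * Q) = fun i => ∑ j, P i j • Q j := by
    ext i j
    simp [Matrix.mul_apply]
  refine (congrArg (detRowAlternating (n := κ) (R := R)) h).trans ?_
  refine (MultilinearMap.map_sum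
    (detRowAlternating (n := κ) (R := R)).toMultilinearMap (fun i j => P i j • Q j)).trans ?_
  refine sum_congr rfl fun f _ => ?_
  exact MultilinearMap.map_smul_univ _ (fun i => P i (f i)) (fun i => Q (f i))

/-- The Cauchy–Binet formula, summed over all functions rather than over subsets. -/
theorem factorial_mul_det_mul (P : Matrix κ ι R) (Q : Matrix ι κ R) :
    ((Fintype.card κ).factorial : R) * (P * Q).det =
      ∑ f : κ → ι, (P.submatrix id f).det * (Q.submatrix f id).det := by
  have h (σ : Equiv.Perm κ) : (P * Q).det =
      ∑ f : κ → ι, (Equiv.Perm.sign σ * ∏ i, P i (f (σ i))) * (Q.submatrix f id).det := by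
    rw [det_mul_eq_sum_prod_mul_det, ← (σ.symm.arrowCongr (Equiv.refl ι)).sum_comp]
    refine sum_congr rfl fun f _ => ?_
    have hdet := Matrix.det_permute σ (Q.submatrix f id)
    rw [Matrix.submatrix_submatrix] at hdet
    have hf : σ.symm.arrowCongr (Equiv.refl ι) f = f ∘ σ := rfl
    rw [Function.comp_id] at hdet
    rw [hf, hdet]
    simp only [Function.comp_apply]
    ring
  calc ((Fintype.card κ).factorial : R) * (P * Q).det
      = ∑ _σ : Equiv.Perm κ, (P * Q).det := by
        rw [sum_const, card_univ, Fintype.card_perm, nsmul_eq_mul]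
    _ = ∑ σ : Equiv.Perm κ, ∑ f : κ → ι,
          (Equiv.Perm.sign σ * ∏ i, P i (f (σ i))) * (Q.submatrix f id).det :=
        sum_congr rfl fun σ _ => h σ
    _ = _ := by
        rw [sum_comm]
        refine sum_congr rfl fun f _ => ?_
        rw [← Matrix.det_transpose (P.submatrix id f),
          Matrix.det_apply' (P.submatrix id f)ᵀ, sum_mul]
        rfl

end CauchyBinet

section CompoundWeight

variable {ι κ : Type*} [Fintype κ] [DecidableEq κ]

/-- The weight of `f` in the expansion of `det (Y * diagonal d * Yᴴ)`: the squared modulus of the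
corresponding maximal minor of `Y`, normalized for the orderings of the columns. -/
noncomputable def minorWeight (Y : Matrix κ ι ℂ) (f : κ → ι) : ℝ :=
  Complex.normSq (Y.submatrix id f).det / (Fintype.card κ).factorial

theorem minorWeight_nonneg (Y : Matrix κ ι ℂ) (f : κ → ι) : 0 ≤ minorWeight Y f :=
  div_nonneg (Complex.normSq_nonneg _) (Nat.cast_nonneg _)

theorem minorWeight_eq_zero (Y : Matrix κ ι ℂ) {f : κ → ι} (hf : ¬ Function.Injective f) :
    minorWeight Y f = 0 := by
  obtain ⟨i, j, hij, hne⟩ : ∃ i j, f i = f j ∧ i ≠ j := by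
    simpa [Function.Injective] using hf
  have : (Y.submatrix id f).det = 0 :=
    Matrix.det_zero_of_column_eq hne fun l => by simp [hij]
  simp [minorWeight, this]

variable [Fintype ι]

theorem det_mul_diagonal_mul_conjTranspose [DecidableEq ι] (Y : Matrix κ ι ℂ) (d : ι → ℝ) :
    (Y * diagonal (fun i => (d i : ℂ)) * Yᴴ).det =
      ((∑ f : κ → ι, minorWeight Y f * ∏ i, d (f i) : ℝ) : ℂ) := by
  have h0 : ((Fintype.card κ).factorial : ℂ) ≠ 0 := Nat.cast_ne_zero.2 (Nat.factorial_ne_zero _)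
  apply mul_left_cancel₀ h0
  rw [factorial_mul_det_mul, Complex.ofReal_sum, mul_sum]
  refine sum_congr rfl fun f _ => ?_
  have h1 : (Y * diagonal (fun i => (d i : ℂ))).submatrix id f =
      Y.submatrix id f * diagonal (fun i => (d (f i) : ℂ)) := by
    ext i j
    simp
  have h2 : Yᴴ.submatrix f id = (Y.submatrix id f)ᴴ := rfl
  rw [h1, h2, det_mul, det_diagonal, det_conjTranspose, minorWeight]
  push_cast
  rw [Complex.normSq_eq_conj_mul_self]
  field_simp
  simp

theorem sum_minorWeight_mul_rpow_le (Y : Matrix κ ι ℂ) {d : ι → ℝ} (hd : ∀ i, 0 ≤ d i)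
    {α : ℝ} (hα0 : 0 ≤ α) (hα1 : α ≤ 1) :
    ∑ f : κ → ι, minorWeight Y f * ∏ i, d (f i) ^ α ≤
      (∑ f : κ → ι, minorWeight Y f) ^ (1 - α) *
        (∑ f : κ → ι, minorWeight Y f * ∏ i, d (f i)) ^ α := by
  have hw := minorWeight_nonneg Y
  have hp (f : κ → ι) : 0 ≤ ∏ i, d (f i) := prod_nonneg fun i _ => hd _
  set P := ∑ f : κ → ι, minorWeight Y f with hP
  have hQ : 0 ≤ ∑ f : κ → ι, minorWeight Y f * ∏ i, d (f i) :=
    sum_nonneg fun f _ => mul_nonneg (hw f) (hp f)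
  rcases (sum_nonneg fun f _ => hw f : 0 ≤ P).eq_or_lt with h0 | h0
  · have hz : ∀ f, minorWeight Y f = 0 := fun f =>
      (sum_eq_zero_iff_of_nonneg fun f _ => hw f).1 h0.symm f (mem_univ f)
    simp only [hz, zero_mul, sum_const_zero]
    exact mul_nonneg (Real.rpow_nonneg h0.le _) (Real.rpow_nonneg le_rfl _)
  · have hJ := (Real.concaveOn_rpow hα0 hα1).le_map_sum (t := univ)
      (w := fun f : κ → ι => minorWeight Y f / P) (p := fun f => ∏ i, d (f i))
      (fun f _ => div_nonneg (hw f) h0.le)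
      (by rw [← sum_div, ← hP, div_self h0.ne']) (fun f _ => hp f)
    simp only [smul_eq_mul, div_mul_eq_mul_div, ← sum_div] at hJ
    rw [Real.div_rpow hQ h0.le, div_le_iff₀ h0] at hJ
    simp only [← Real.finsetProd_rpow _ _ (fun i _ => hd _)] at hJ
    refine hJ.trans_eq ?_
    rw [Real.rpow_sub h0, Real.rpow_one]
    ring

end CompoundWeight

/-- Log-convexity of the determinant along `α ↦ Y * diagonal (d ^ α) * Yᴴ`. -/
theorem det_mul_diagonal_rpow_le {ι κ : Type*} [Fintype ι] [Fintype κ] [DecidableEq ι]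
    [DecidableEq κ] (Y : Matrix κ ι ℂ) {d : ι → ℝ} (hd : ∀ i, 0 ≤ d i)
    {α : ℝ} (hα0 : 0 ≤ α) (hα1 : α ≤ 1) :
    (Y * diagonal (fun i => ((d i ^ α : ℝ) : ℂ)) * Yᴴ).det.re ≤
      (Y * Yᴴ).det.re ^ (1 - α) * (Y * diagonal (fun i => (d i : ℂ)) * Yᴴ).det.re ^ α := by
  have h1 : Y * Yᴴ = Y * (diagonal (fun _ => ((1 : ℝ) : ℂ)) : Matrix ι ι ℂ) * Yᴴ := by simp
  rw [h1]
  simp only [det_mul_diagonal_mul_conjTranspose, Complex.ofReal_re, prod_const_one, mul_one]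
  exact sum_minorWeight_mul_rpow_le Y hd hα0 hα1

theorem prod_comp_le_prod_castLE {n k : ℕ} (hk : k ≤ n) {a : Fin n → ℝ} (ha : Antitone a)
    (ha0 : ∀ i, 0 ≤ a i) {f : Fin k → Fin n} (hf : Function.Injective f) :
    ∏ i, a (f i) ≤ ∏ i, a (Fin.castLE hk i) := by
  have hc : (univ.image f).card = k := by simp [card_image_of_injective _ hf]
  set g := (univ.image f).orderEmbOfFin hc with hg
  have h1 : ∏ i, a (f i) = ∏ i, a (g i) := by
    rw [← prod_image (g := f) (fun x _ y _ h => hf h) (f := a),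
      ← prod_image (g := g) (fun x _ y _ h => g.injective h) (f := a),
      Finset.image_orderEmbOfFin_univ]
  rw [h1]
  refine prod_le_prod (fun i _ => ha0 _) fun i _ => ha ?_
  have key : ∀ m (hm : m < k), m ≤ (g ⟨m, hm⟩ : ℕ) := by
    intro m
    induction m with
    | zero => intro _; exact Nat.zero_le _
    | succ m ih =>
      intro hm
      have h := ih (by lia)
      have h' : g ⟨m, by lia⟩ < g ⟨m + 1, hm⟩ := g.strictMono (by simp [Fin.lt_def])
      rw [Fin.lt_def] at h'
      lia
  exact Fin.le_def.2 (key i i.2)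

theorem prod_filter_val_lt {n k : ℕ} (hk : k ≤ n) (a : Fin n → ℝ) :
    ∏ i ∈ univ.filter (fun i : Fin n => (i : ℕ) < k), a i = ∏ i : Fin k, a (Fin.castLE hk i) := by
  refine (prod_bij (fun i _ => Fin.castLE hk i) ?_ ?_ ?_ ?_).symm
  · intro i _
    simp
  · intro i _ j _ h
    exact Fin.castLE_injective hk h
  · intro j hj
    exact ⟨⟨j, (mem_filter.1 hj).2⟩, mem_univ _, rfl⟩
  · intro i _
    rfl

section Eigenvalues

variable {n : ℕ} {A B : Matrix (Fin n) (Fin n) ℂ}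

theorem eigDown_antitone (hA : A.IsHermitian) : Antitone (eigDown hA) := fun _ _ hij =>
  Tuple.monotone_sort hA.eigenvalues (Fin.rev_le_rev.2 hij)

theorem eigDown_pos (hA : A.PosDef) (i : Fin n) : 0 < eigDown hA.isHermitian i :=
  hA.eigenvalues_pos _

theorem prod_eigDown (hA : A.IsHermitian) : ∏ i, eigDown hA i = A.det.re := by
  have h : ∏ i, eigDown hA i = ∏ i, hA.eigenvalues i :=
    (Fin.revPerm.trans (Tuple.sort hA.eigenvalues)).prod_comp hA.eigenvalues
  rw [h, hA.det_eq_prod_eigenvalues]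
  simp [← Complex.ofReal_prod]

theorem prodLarge_eq (hA : A.IsHermitian) {k : ℕ} (hk : k ≤ n) :
    prodLarge A k = ∏ i : Fin k, eigDown hA (Fin.castLE hk i) := by
  rw [prodLarge, dif_pos hA]
  exact prod_filter_val_lt hk _

theorem cfc_eq_mul_diagonal (hA : A.IsHermitian) (f : ℝ → ℝ) :
    cfc f A = (hA.eigenvectorUnitary : Matrix (Fin n) (Fin n) ℂ) *
      diagonal (fun i => (f (hA.eigenvalues i) : ℂ)) *
      (hA.eigenvectorUnitary : Matrix (Fin n) (Fin n) ℂ)ᴴ := by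
  rw [hA.cfc_eq, Matrix.IsHermitian.cfc, Unitary.conjStarAlgAut_apply]
  rfl

theorem exists_eq_mul_diagonal_eigDown (hA : A.IsHermitian) :
    ∃ W : Matrix (Fin n) (Fin n) ℂ, W * Wᴴ = 1 ∧ Wᴴ * W = 1 ∧
      A = W * diagonal (fun i => (eigDown hA i : ℂ)) * Wᴴ := by
  set e := Fin.revPerm.trans (Tuple.sort hA.eigenvalues)
  set U := (hA.eigenvectorUnitary : Matrix (Fin n) (Fin n) ℂ)
  have h1 : U * Uᴴ = 1 := Unitary.coe_mul_star_self _
  have h2 : Uᴴ * U = 1 := Unitary.coe_star_mul_self _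
  have h3 : A = U * diagonal (fun i => (hA.eigenvalues i : ℂ)) * Uᴴ := by
    conv_lhs => rw [hA.spectral_theorem, Unitary.conjStarAlgAut_apply]
    rfl
  have h4 : diagonal (fun i => (eigDown hA i : ℂ)) =
      (diagonal (fun i => (hA.eigenvalues i : ℂ))).submatrix e e := by
    rw [submatrix_diagonal_equiv]
    rfl
  refine ⟨U.submatrix id e, ?_, ?_, ?_⟩
  · rw [conjTranspose_submatrix, submatrix_mul_equiv, h1, submatrix_id_id]
  · rw [conjTranspose_submatrix, ← submatrix_mul _ _ _ _ _ Function.bijective_id, h2,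
      submatrix_one_equiv]
  · rw [conjTranspose_submatrix, h4, submatrix_mul_equiv, submatrix_mul_equiv, submatrix_id_id,
      ← h3]

theorem det_compression_le (hA : A.PosDef) {k : ℕ} (hk : k ≤ n) {V : Matrix (Fin k) (Fin n) ℂ}
    (hV : V * Vᴴ = 1) :
    (V * A * Vᴴ).det.re ≤ ∏ i : Fin k, eigDown hA.isHermitian (Fin.castLE hk i) := by
  obtain ⟨W, hW, -, h⟩ := exists_eq_mul_diagonal_eigDown hA.isHermitian
  have h1 : V * A * Vᴴ =
      (V * W) * diagonal (fun i => (eigDown hA.isHermitian i : ℂ)) * (V * W)ᴴ := by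
    conv_lhs => rw [h]
    simp only [conjTranspose_mul, Matrix.mul_assoc]
  have h2 : ∑ f, minorWeight (V * W) f = 1 := by
    have h3 := det_mul_diagonal_mul_conjTranspose (V * W) (fun _ => 1)
    have h4 : (V * W) * (V * W)ᴴ = 1 := by
      rw [conjTranspose_mul, Matrix.mul_assoc, ← Matrix.mul_assoc W, hW, Matrix.one_mul, hV]
    simp only [Complex.ofReal_one, diagonal_one, Matrix.mul_one, h4, det_one, prod_const_one,
      mul_one] at h3
    exact_mod_cast h3.symm
  rw [h1, det_mul_diagonal_mul_conjTranspose, Complex.ofReal_re,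
    ← one_mul (∏ i : Fin k, eigDown hA.isHermitian (Fin.castLE hk i)), ← h2, sum_mul]
  refine sum_le_sum fun f _ => ?_
  by_cases hf : Function.Injective f
  · exact mul_le_mul_of_nonneg_left (prod_comp_le_prod_castLE hk (eigDown_antitone _)
      (fun i => (eigDown_pos hA i).le) hf) (minorWeight_nonneg _ _)
  · simp [minorWeight_eq_zero _ hf]

theorem exists_det_compression_eq (hA : A.IsHermitian) {k : ℕ} (hk : k ≤ n) :
    ∃ V : Matrix (Fin k) (Fin n) ℂ, V * Vᴴ = 1 ∧
      (V * A * Vᴴ).det.re = ∏ i : Fin k, eigDown hA (Fin.castLE hk i) := by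
  obtain ⟨W, -, hW, h⟩ := exists_eq_mul_diagonal_eigDown hA
  have hinj : Function.Injective (Fin.castLE hk) := Fin.castLE_injective hk
  have h1 : Wᴴ * A * W = diagonal (fun i => (eigDown hA i : ℂ)) := by
    conv_lhs => rw [h]
    rw [Matrix.mul_assoc, Matrix.mul_assoc, hW, Matrix.mul_one, ← Matrix.mul_assoc, hW,
      Matrix.one_mul]
  refine ⟨Wᴴ.submatrix (Fin.castLE hk) id, ?_, ?_⟩
  · rw [conjTranspose_submatrix, conjTranspose_conjTranspose,
      ← submatrix_mul _ _ _ _ _ Function.bijective_id, hW, submatrix_one _ hinj]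
  · have h2 : Wᴴ.submatrix (Fin.castLE hk) id * A * (Wᴴ.submatrix (Fin.castLE hk) id)ᴴ =
        (Wᴴ * A * W).submatrix (Fin.castLE hk) (Fin.castLE hk) := by
      rw [conjTranspose_submatrix, conjTranspose_conjTranspose,
        submatrix_mul _ _ _ _ _ Function.bijective_id,
        submatrix_mul _ _ _ _ _ Function.bijective_id, submatrix_id_id]
    rw [h2, h1, submatrix_diagonal _ _ hinj, det_diagonal]
    simp [← Complex.ofReal_prod]

theorem spectrum_pos_of_posDef (hA : A.PosDef) {x : ℝ} (hx : x ∈ spectrum ℝ A) : 0 < x := by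
  rw [hA.isHermitian.spectrum_real_eq_range_eigenvalues] at hx
  obtain ⟨i, rfl⟩ := hx
  exact hA.eigenvalues_pos i

theorem continuousOn_spectrum (f : ℝ → ℝ) : ContinuousOn f (spectrum ℝ A) :=
  Matrix.finite_real_spectrum.continuousOn f

theorem sqrtM_isHermitian (A : Matrix (Fin n) (Fin n) ℂ) : (sqrtM A)ᴴ = sqrtM A :=
  (cfc_predicate Real.sqrt A : IsSelfAdjoint _)

theorem invSqrtM_isHermitian (A : Matrix (Fin n) (Fin n) ℂ) : (invSqrtM A)ᴴ = invSqrtM A :=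
  (cfc_predicate (fun x : ℝ => (Real.sqrt x)⁻¹) A : IsSelfAdjoint _)

theorem sqrtM_mul_sqrtM (hA : A.PosDef) : sqrtM A * sqrtM A = A := by
  have hA' : IsSelfAdjoint A := hA.isHermitian
  rw [sqrtM, ← cfc_mul _ _ A (continuousOn_spectrum _) (continuousOn_spectrum _)]
  conv_rhs => rw [← cfc_id ℝ A]
  exact cfc_congr fun x hx => Real.mul_self_sqrt (spectrum_pos_of_posDef hA hx).le

theorem sqrtM_mul_invSqrtM (hA : A.PosDef) : sqrtM A * invSqrtM A = 1 := by
  have hA' : IsSelfAdjoint A := hA.isHermitian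
  rw [sqrtM, invSqrtM, ← cfc_mul _ _ A (continuousOn_spectrum _) (continuousOn_spectrum _),
    ← cfc_one ℝ A]
  exact cfc_congr fun x hx =>
    mul_inv_cancel₀ (Real.sqrt_pos.2 (spectrum_pos_of_posDef hA hx)).ne'

/-- Simultaneous diagonalization by congruence of `A`, `B` and of their geometric means. -/
theorem exists_congruence_diagonal (hA : A.PosDef) (hB : B.PosDef) (α : ℝ) :
    ∃ (X : Matrix (Fin n) (Fin n) ℂ) (d : Fin n → ℝ), (∀ i, 0 < d i) ∧ A = X * Xᴴ ∧
      B = X * diagonal (fun i => (d i : ℂ)) * Xᴴ ∧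
      sharp α A B = X * diagonal (fun i => ((d i ^ α : ℝ) : ℂ)) * Xᴴ := by
  have hSI := sqrtM_mul_invSqrtM hA
  have hIS : invSqrtM A * sqrtM A = 1 := mul_eq_one_comm.1 hSI
  have hC : (invSqrtM A * B * invSqrtM A).PosDef := by
    have h := hB.conjTranspose_mul_mul_same (B := invSqrtM A)
      (mulVec_injective_of_isUnit (IsUnit.of_mul_eq_one_right _ hSI))
    rwa [invSqrtM_isHermitian] at h
  set U := (hC.isHermitian.eigenvectorUnitary : Matrix (Fin n) (Fin n) ℂ)
  have hU : U * Uᴴ = 1 := Unitary.coe_mul_star_self _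
  have hC' : cfc (fun x : ℝ => x) (invSqrtM A * B * invSqrtM A) = invSqrtM A * B * invSqrtM A :=
    cfc_id' ℝ _ hC.isHermitian
  have hB' : sqrtM A * (invSqrtM A * B * invSqrtM A) * sqrtM A = B := by
    rw [Matrix.mul_assoc (invSqrtM A), ← Matrix.mul_assoc, hSI, Matrix.one_mul, Matrix.mul_assoc,
      hIS, Matrix.mul_one]
  refine ⟨sqrtM A * U, hC.isHermitian.eigenvalues, hC.eigenvalues_pos, ?_, ?_, ?_⟩
  · rw [conjTranspose_mul, Matrix.mul_assoc, ← Matrix.mul_assoc U, hU, Matrix.one_mul,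
      sqrtM_isHermitian, sqrtM_mul_sqrtM hA]
  · conv_lhs => rw [← hB', ← hC', cfc_eq_mul_diagonal hC.isHermitian]
    simp only [conjTranspose_mul, sqrtM_isHermitian, Matrix.mul_assoc, U]
  · rw [sharp, cfc_eq_mul_diagonal hC.isHermitian]
    simp only [conjTranspose_mul, sqrtM_isHermitian, Matrix.mul_assoc, U]

theorem sharp_isHermitian (α : ℝ) (A B : Matrix (Fin n) (Fin n) ℂ) :
    (sharp α A B).IsHermitian := by
  have h : (cfc (fun x : ℝ => x ^ α) (invSqrtM A * B * invSqrtM A))ᴴ =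
      cfc (fun x : ℝ => x ^ α) (invSqrtM A * B * invSqrtM A) :=
    (cfc_predicate (fun x : ℝ => x ^ α) _ : IsSelfAdjoint _)
  rw [IsHermitian, sharp, conjTranspose_mul, conjTranspose_mul, h, sqrtM_isHermitian,
    ← Matrix.mul_assoc]

theorem det_sharp_re (hA : A.PosDef) (hB : B.PosDef) (α : ℝ) :
    (sharp α A B).det.re = A.det.re ^ (1 - α) * B.det.re ^ α := by
  obtain ⟨X, d, hd, h1, h2, h3⟩ := exists_congruence_diagonal hA hB α
  have key (c : Fin n → ℝ) : (X * diagonal (fun i => (c i : ℂ)) * Xᴴ).det.re =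
      Complex.normSq X.det * ∏ i, c i := by
    have : (X * diagonal (fun i => (c i : ℂ)) * Xᴴ).det =
        ((Complex.normSq X.det * ∏ i, c i : ℝ) : ℂ) := by
      rw [det_mul, det_mul, det_conjTranspose, det_diagonal]
      push_cast
      rw [Complex.normSq_eq_conj_mul_self, ← starRingEnd_apply]
      ring
    rw [this, Complex.ofReal_re]
  have hA1 : A.det.re = Complex.normSq X.det := by
    have h := key fun _ => 1
    simpa only [Complex.ofReal_one, diagonal_one, Matrix.mul_one, ← h1, prod_const_one,
      mul_one] using h
  have hpos : 0 < Complex.normSq X.det := hA1 ▸ (Complex.pos_iff.1 hA.det_pos).1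
  rw [hA1, h3, key]
  conv_rhs => rw [h2, key]
  rw [Real.mul_rpow hpos.le (prod_nonneg fun i _ => (hd i).le), ← mul_assoc,
    ← Real.rpow_add hpos, sub_add_cancel, Real.rpow_one,
    Real.finsetProd_rpow _ _ fun i _ => (hd i).le]

theorem prodLarge_sharp_le (hA : A.PosDef) (hB : B.PosDef) {α : ℝ} (hα0 : 0 ≤ α) (hα1 : α ≤ 1)
    {k : ℕ} (hk : k ≤ n) :
    prodLarge (sharp α A B) k ≤
      ∏ i : Fin k, (eigDown hA.isHermitian (Fin.castLE hk i) ^ (1 - α) *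
        eigDown hB.isHermitian (Fin.castLE hk i) ^ α) := by
  obtain ⟨X, d, hd, h1, h2, h3⟩ := exists_congruence_diagonal hA hB α
  obtain ⟨V, hV, hdet⟩ := exists_det_compression_eq (sharp_isHermitian α A B) hk
  have hconj (D : Matrix (Fin n) (Fin n) ℂ) :
      V * (X * D * Xᴴ) * Vᴴ = (V * X) * D * (V * X)ᴴ := by
    simp only [conjTranspose_mul, Matrix.mul_assoc]
  have hconjA : V * A * Vᴴ = (V * X) * (V * X)ᴴ := by
    conv_lhs => rw [h1]
    simp only [conjTranspose_mul, Matrix.mul_assoc]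
  have hconjB : V * B * Vᴴ = (V * X) * diagonal (fun i => (d i : ℂ)) * (V * X)ᴴ := by
    conv_lhs => rw [h2]
    exact hconj _
  have hineq := det_mul_diagonal_rpow_le (V * X) (fun i => (hd i).le) hα0 hα1
  rw [← hconjA, ← hconjB, ← hconj, ← h3, hdet] at hineq
  have hnonneg {M : Matrix (Fin n) (Fin n) ℂ} (hM : M.PosDef) : 0 ≤ (V * M * Vᴴ).det.re :=
    (Complex.nonneg_iff.1 (hM.posSemidef.mul_mul_conjTranspose_same V).det_nonneg).1
  rw [prodLarge_eq (sharp_isHermitian α A B) hk, prod_mul_distrib,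
    Real.finsetProd_rpow _ _ fun i _ => (eigDown_pos hA _).le,
    Real.finsetProd_rpow _ _ fun i _ => (eigDown_pos hB _).le]
  refine hineq.trans (mul_le_mul ?_ ?_ (Real.rpow_nonneg (hnonneg hB) _) ?_)
  · exact Real.rpow_le_rpow (hnonneg hA) (det_compression_le hA hk hV) (sub_nonneg.2 hα1)
  · exact Real.rpow_le_rpow (hnonneg hB) (det_compression_le hB hk hV) hα0
  · exact Real.rpow_nonneg (prod_nonneg fun i _ => (eigDown_pos hA _).le) _

end Eigenvalues

theorem stmt_10 {n : ℕ} (α : ℝ) (hα0 : 0 ≤ α) (hα1 : α ≤ 1)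
    (A B : Matrix (Fin n) (Fin n) ℂ) (hA : A.PosDef) (hB : B.PosDef) :
    (∀ k : ℕ, 1 ≤ k → k ≤ n - 1 →
      prodLarge (sharp α A B) k ≤
        ∏ i ∈ Finset.univ.filter (fun i : Fin n => (i : ℕ) < k),
          (eigDown hA.isHermitian i ^ (1 - α) * eigDown hB.isHermitian i ^ α)) ∧
    prodLarge (sharp α A B) n =
      ∏ i : Fin n, (eigDown hA.isHermitian i ^ (1 - α) * eigDown hB.isHermitian i ^ α) := by
  refine ⟨fun k _ hk => ?_, ?_⟩
  · have hkn : k ≤ n := by lia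
    rw [prod_filter_val_lt hkn]
    exact prodLarge_sharp_le hA hB hα0 hα1 hkn
  · rw [prodLarge_eq (sharp_isHermitian α A B) le_rfl, prod_mul_distrib,
      Real.finsetProd_rpow _ _ fun i _ => (eigDown_pos hA _).le,
      Real.finsetProd_rpow _ _ fun i _ => (eigDown_pos hB _).le]
    simp only [Fin.castLE_rfl, id_eq, prod_eigDown]
    exact det_sharp_re hA hB α
end
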